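/- Let V be a finite-dimensional real vector space, ω a linear symplectic form on V, and v, w ∈ V linearly independent vectors with ω(v, w) = 0. Then there exists a complex structure J on V compatible with ω such that ω(v, J w) = 0, ω(J v, w) = 0 and ω(J v, J w) = 0; that is, the planes spanned by {v, J v} and by {w, J w} are ω-orthogonal. -/

import Mathlib

/-- A linear symplectic form: an alternating, nondegenerate bilinear form. -/
def IsSymplecticForm {V : Type*} [AddCommGroup V] [Module ℝ V]
    (ω : V →ₗ[ℝ] V →ₗ[ℝ] ℝ) : Prop :=
  (∀ v, ω v v = 0) ∧ ∀ v, v ≠ 0 → ∃ w, ω v w ≠ 0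

/-- A complex structure: a linear endomorphism with `J ∘ J = -id`. -/
def IsComplexStructure {V : Type*} [AddCommGroup V] [Module ℝ V]
    (J : V →ₗ[ℝ] V) : Prop :=
  ∀ v, J (J v) = -v

/-- `J` is compatible with `ω`: tamed by `ω` and `ω(Ju, Jv) = ω(u, v)`. -/
def CompatibleWith {V : Type*} [AddCommGroup V] [Module ℝ V]
    (ω : V →ₗ[ℝ] V →ₗ[ℝ] ℝ) (J : V →ₗ[ℝ] V) : Prop :=
  (∀ v, v ≠ 0 → 0 < ω v (J v)) ∧ ∀ u v, ω (J u) (J v) = ω u v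

/-!
A vector `f` with `ω v f = 1` and `ω w f = 0` exists because `v ∉ span {w}` and `span {w}` is its
own double symplectic complement. The plane `span {v, f}` splits off `ω`-orthogonally, and rotating
it by `v ↦ f ↦ -v` while choosing any compatible complex structure on its complement gives a
compatible `J` with `J v = f`. Then `ω (J v) w = 0`, and the remaining two relations hold because a
compatible complex structure is `ω`-isometric and `ω`-skew. Splitting off planes one at a time also
shows that compatible complex structures exist.
-/

section DirectSum

variable {R M : Type*} [Ring R] [AddCommGroup M] [Module R M] {P Q : Submodule R M}

/-- The direct sum `S ⊕ T` of endomorphisms of the two summands of an internal direct sum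
`M = P ⊕ Q`, as an endomorphism of `M`. It is used to assemble complex structures. -/
noncomputable def directSumEnd (h : IsCompl P Q) (S : P →ₗ[R] P) (T : Q →ₗ[R] Q) : M →ₗ[R] M :=
  LinearMap.ofIsCompl h (P.subtype ∘ₗ S) (Q.subtype ∘ₗ T)

theorem directSumEnd_add (h : IsCompl P Q) (S : P →ₗ[R] P) (T : Q →ₗ[R] Q) (p : P) (q : Q) :
    directSumEnd h S T (p + q) = S p + T q := by
  simp [directSumEnd]

theorem directSumEnd_coe_left (h : IsCompl P Q) (S : P →ₗ[R] P) (T : Q →ₗ[R] Q) (p : P) :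
    directSumEnd h S T p = S p := by
  simp [directSumEnd]

end DirectSum

section BilinForm

variable {R M : Type*} [CommRing R] [AddCommGroup M] [Module R M] {B : LinearMap.BilinForm R M}

theorem apply_add_add_of_orthogonal (hB : B.IsRefl) {P : Submodule R M} (p p' : P)
    (q q' : B.orthogonal P) : B (p + q) (p' + q') = B p p' + B q q' := by
  have hpq : B p q' = 0 := q'.2 p p.2
  have hqp : B q p' = 0 := hB _ _ (q.2 p' p'.2)
  simp [hpq, hqp]

/-- For a hyperbolic pair, that is `B e f = 1`, this restricts to the rotation `e ↦ f ↦ -e` of the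
plane `span {e, f}`, and it vanishes on the orthogonal complement of that plane. It is defined on
the whole space so that no coordinates on the plane are needed. -/
def planeRotation (B : LinearMap.BilinForm R M) (e f : M) : M →ₗ[R] M :=
  -((B e).smulRight e + (B f).smulRight f)

variable {e f : M}

theorem planeRotation_apply (x : M) : planeRotation B e f x = -(B e x • e + B f x • f) := rfl

theorem planeRotation_mem_span (x : M) : planeRotation B e f x ∈ Submodule.span R {e, f} :=
  neg_mem (Submodule.mem_span_pair.2 ⟨_, _, rfl⟩)

theorem mem_orthogonal_span_pair {x : M} :
    x ∈ B.orthogonal (Submodule.span R {e, f}) ↔ B e x = 0 ∧ B f x = 0 := by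
  rw [LinearMap.BilinForm.mem_orthogonal_iff]
  refine ⟨fun h ↦ ⟨h e (Submodule.subset_span (by simp)), h f (Submodule.subset_span (by simp))⟩,
    fun ⟨he, hf⟩ n hn ↦ ?_⟩
  obtain ⟨a, b, rfl⟩ := Submodule.mem_span_pair.1 hn
  simp [he, hf]

theorem apply_planeRotation (hB : B.IsAlt) (x y : M) :
    B x (planeRotation B e f y) = B e x * B e y + B f x * B f y := by
  rw [planeRotation_apply, map_neg, map_add, map_smul, map_smul, ← hB.neg_eq e x, ← hB.neg_eq f x]
  simp only [smul_eq_mul]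
  ring

theorem planeRotation_left (hB : B.IsAlt) (hef : B e f = 1) : planeRotation B e f e = f := by
  rw [planeRotation_apply, ← hB.neg_eq e f, hB e, hef]
  simp

theorem add_planeRotation_planeRotation_mem_orthogonal (hB : B.IsAlt) (hef : B e f = 1) (x : M) :
    x + planeRotation B e f (planeRotation B e f x) ∈
      B.orthogonal (Submodule.span R {e, f}) := by
  have hfe : B f e = -1 := by rw [← hB.neg_eq, hef]
  rw [mem_orthogonal_span_pair]
  simp [apply_planeRotation hB, hB e, hB f, hef, hfe]

theorem isCompl_span_pair_orthogonal (hB : B.IsAlt) (hef : B e f = 1) :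
    IsCompl (Submodule.span R {e, f}) (B.orthogonal (Submodule.span R {e, f})) := by
  have hfe : B f e = -1 := by rw [← hB.neg_eq, hef]
  constructor
  · rw [Submodule.disjoint_def]
    intro x hx hx'
    obtain ⟨a, b, rfl⟩ := Submodule.mem_span_pair.1 hx
    rw [mem_orthogonal_span_pair] at hx'
    have hab : b = 0 ∧ a = 0 := by simpa [hB e, hB f, hef, hfe] using hx'
    simp [hab]
  · -- Minus the square of the rotation is the orthogonal projection onto the plane.
    exact Submodule.codisjoint_iff_exists_add_eq.2 fun x ↦
      ⟨_, _, neg_mem (planeRotation_mem_span _),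
        add_planeRotation_planeRotation_mem_orthogonal hB hef x, by abel⟩

theorem planeRotation_planeRotation (hB : B.IsAlt) (hef : B e f = 1) {x : M}
    (hx : x ∈ Submodule.span R {e, f}) : planeRotation B e f (planeRotation B e f x) = -x := by
  refine (add_eq_zero_iff_neg_eq.1 ?_).symm
  exact Submodule.disjoint_def.1 (isCompl_span_pair_orthogonal hB hef).disjoint _
    (add_mem hx (planeRotation_mem_span _))
    (add_planeRotation_planeRotation_mem_orthogonal hB hef x)

end BilinForm

section Symplectic

variable {V : Type*} [AddCommGroup V] [Module ℝ V] {ω : LinearMap.BilinForm ℝ V}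

namespace IsSymplecticForm

theorem isAlt (hω : IsSymplecticForm ω) : ω.IsAlt := hω.1

theorem nondegenerate (hω : IsSymplecticForm ω) : ω.Nondegenerate := by
  refine hω.isAlt.isRefl.nondegenerate_iff_separatingLeft.2 fun x hx ↦ ?_
  by_contra hx0
  obtain ⟨y, hy⟩ := hω.2 x hx0
  exact hy (hx y)

theorem restrict_orthogonal (hω : IsSymplecticForm ω) {P : Submodule ℝ V}
    (h : Codisjoint P (ω.orthogonal P)) : IsSymplecticForm (ω.restrict (ω.orthogonal P)) := by
  refine ⟨fun x ↦ hω.isAlt x, fun x hx ↦ ?_⟩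
  obtain ⟨y, hy⟩ := hω.2 x (by simpa using hx)
  obtain ⟨p, q, hp, hq, rfl⟩ := Submodule.codisjoint_iff_exists_add_eq.1 h y
  have hxp : ω x p = 0 := hω.isAlt.isRefl _ _ (x.2 p hp)
  exact ⟨⟨q, hq⟩, by simpa [hxp] using hy⟩

theorem exists_mem_orthogonal_apply_eq_one [FiniteDimensional ℝ V] (hω : IsSymplecticForm ω)
    {P : Submodule ℝ V} {v : V} (hv : v ∉ P) : ∃ f ∈ ω.orthogonal P, ω v f = 1 := by
  rw [← LinearMap.BilinForm.orthogonal_orthogonal hω.nondegenerate hω.isAlt.isRefl P,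
    LinearMap.BilinForm.mem_orthogonal_iff] at hv
  push Not at hv
  obtain ⟨g, hgP, hgv⟩ := hv
  have hvg : ω v g ≠ 0 := fun h ↦ hgv (hω.isAlt.isRefl v g h)
  exact ⟨(ω v g)⁻¹ • g, Submodule.smul_mem _ _ hgP, by simp [hvg]⟩

end IsSymplecticForm

theorem CompatibleWith.apply_map_self_nonneg {J : V →ₗ[ℝ] V} (hJ : CompatibleWith ω J) (x : V) :
    0 ≤ ω x (J x) := by
  rcases eq_or_ne x 0 with rfl | hx
  · simp
  · exact (hJ.1 x hx).le

theorem CompatibleWith.apply_map_right {J : V →ₗ[ℝ] V} (hωJ : CompatibleWith ω J)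
    (hJ : IsComplexStructure J) (x y : V) : ω x (J y) = -ω (J x) y := by
  rw [← hωJ.2 x (J y), hJ, map_neg]

theorem IsComplexStructure.directSumEnd {P Q : Submodule ℝ V} (h : IsCompl P Q)
    {S : P →ₗ[ℝ] P} {T : Q →ₗ[ℝ] Q} (hS : IsComplexStructure S) (hT : IsComplexStructure T) :
    IsComplexStructure (directSumEnd h S T) := by
  intro x
  obtain ⟨p, q, rfl, -⟩ := Submodule.existsUnique_add_of_isCompl h x
  rw [directSumEnd_add, directSumEnd_add, hS, hT, Submodule.coe_neg, Submodule.coe_neg, neg_add]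

theorem CompatibleWith.directSumEnd (hω : ω.IsRefl) {P : Submodule ℝ V}
    (h : IsCompl P (ω.orthogonal P)) {S : P →ₗ[ℝ] P} {T : ω.orthogonal P →ₗ[ℝ] ω.orthogonal P}
    (hS : CompatibleWith (ω.restrict P) S)
    (hT : CompatibleWith (ω.restrict (ω.orthogonal P)) T) :
    CompatibleWith ω (directSumEnd h S T) := by
  constructor
  · intro x hx
    obtain ⟨p, q, rfl, -⟩ := Submodule.existsUnique_add_of_isCompl h x
    rw [directSumEnd_add, apply_add_add_of_orthogonal hω]
    rcases eq_or_ne p 0 with rfl | hp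
    · have hq : q ≠ 0 := by rintro rfl; simp at hx
      exact add_pos_of_nonneg_of_pos (hS.apply_map_self_nonneg 0) (hT.1 q hq)
    · exact add_pos_of_pos_of_nonneg (hS.1 p hp) (hT.apply_map_self_nonneg q)
  · intro x y
    obtain ⟨p, q, rfl, -⟩ := Submodule.existsUnique_add_of_isCompl h x
    obtain ⟨p', q', rfl, -⟩ := Submodule.existsUnique_add_of_isCompl h y
    simp only [directSumEnd_add, apply_add_add_of_orthogonal hω]
    exact congrArg₂ (· + ·) (hS.2 p p') (hT.2 q q')

section HyperbolicPlane

variable {e f : V}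

theorem apply_planeRotation_self_pos (hω : ω.IsAlt) (hef : ω e f = 1) {x : V}
    (hx : x ∈ Submodule.span ℝ {e, f}) (hx0 : x ≠ 0) : 0 < ω x (planeRotation ω e f x) := by
  have hx' : ¬(ω e x = 0 ∧ ω f x = 0) := fun h ↦ hx0 <|
    Submodule.disjoint_def.1 (isCompl_span_pair_orthogonal hω hef).disjoint x hx
      (mem_orthogonal_span_pair.2 h)
  rw [apply_planeRotation hω]
  exact lt_of_le_of_ne (add_nonneg (mul_self_nonneg _) (mul_self_nonneg _))
    fun h ↦ hx' (mul_self_add_mul_self_eq_zero.1 h.symm)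

theorem exists_compatible_complexStructure_span_pair (hω : ω.IsAlt) (hef : ω e f = 1) :
    ∃ S : Submodule.span ℝ {e, f} →ₗ[ℝ] Submodule.span ℝ {e, f},
      IsComplexStructure S ∧ CompatibleWith (ω.restrict (Submodule.span ℝ {e, f})) S ∧
      ∀ x, (S x : V) = planeRotation ω e f x := by
  refine ⟨(planeRotation ω e f).restrict fun x _ ↦ planeRotation_mem_span x,
    fun x ↦ Subtype.ext (planeRotation_planeRotation hω hef x.2),
    ⟨fun x hx ↦ apply_planeRotation_self_pos hω hef x.2 (by simpa using hx), fun x y ↦ ?_⟩,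
    fun x ↦ rfl⟩
  calc ω (planeRotation ω e f x) (planeRotation ω e f y)
      = ω y (planeRotation ω e f (planeRotation ω e f x)) := by
        rw [apply_planeRotation hω, apply_planeRotation hω y]; ring
    _ = ω x y := by rw [planeRotation_planeRotation hω hef x.2, map_neg, hω.neg_eq]

theorem exists_compatible_complexStructure_map_eq_of_orthogonal (hω : ω.IsAlt) (hef : ω e f = 1)
    {T : ω.orthogonal (Submodule.span ℝ {e, f}) →ₗ[ℝ] ω.orthogonal (Submodule.span ℝ {e, f})}
    (hT : IsComplexStructure T)
    (hωT : CompatibleWith (ω.restrict (ω.orthogonal (Submodule.span ℝ {e, f}))) T) :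
    ∃ J : V →ₗ[ℝ] V, IsComplexStructure J ∧ CompatibleWith ω J ∧ J e = f := by
  obtain ⟨S, hS, hωS, hSx⟩ := exists_compatible_complexStructure_span_pair hω hef
  have h := isCompl_span_pair_orthogonal hω hef
  refine ⟨directSumEnd h S T, hS.directSumEnd h hT, hωS.directSumEnd hω.isRefl h hωT, ?_⟩
  have he : e ∈ Submodule.span ℝ {e, f} := Submodule.subset_span (by simp)
  rw [directSumEnd_coe_left h S T ⟨e, he⟩, hSx, planeRotation_left hω hef]

end HyperbolicPlane

namespace IsSymplecticForm

theorem exists_compatible_complexStructure [FiniteDimensional ℝ V] (hω : IsSymplecticForm ω) :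
    ∃ J : V →ₗ[ℝ] V, IsComplexStructure J ∧ CompatibleWith ω J := by
  induction hn : Module.finrank ℝ V using Nat.strong_induction_on generalizing V with
  | _ n ih =>
    rcases subsingleton_or_nontrivial V with hV | hV
    · exact ⟨0, fun x ↦ Subsingleton.elim _ _, fun x hx ↦ (hx (Subsingleton.elim x 0)).elim,
        fun x y ↦ by simp [Subsingleton.elim x 0]⟩
    · obtain ⟨e, he⟩ := exists_ne (0 : V)
      obtain ⟨f, -, hef⟩ := hω.exists_mem_orthogonal_apply_eq_one (P := ⊥) (by simpa using he)
      have hne : ω.orthogonal (Submodule.span ℝ {e, f}) ≠ ⊤ := fun h ↦ by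
        have hf := mem_orthogonal_span_pair.1 (h ▸ Submodule.mem_top : f ∈ ω.orthogonal _)
        exact one_ne_zero (hef.symm.trans hf.1)
      have h := isCompl_span_pair_orthogonal hω.isAlt hef
      obtain ⟨T, hT, hωT⟩ :=
        ih _ (hn ▸ Submodule.finrank_lt hne) (hω.restrict_orthogonal h.codisjoint) rfl
      obtain ⟨J, hJ, hωJ, -⟩ :=
        exists_compatible_complexStructure_map_eq_of_orthogonal hω.isAlt hef hT hωT
      exact ⟨J, hJ, hωJ⟩

theorem exists_compatible_complexStructure_map_eq [FiniteDimensional ℝ V]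
    (hω : IsSymplecticForm ω) {e f : V} (hef : ω e f = 1) :
    ∃ J : V →ₗ[ℝ] V, IsComplexStructure J ∧ CompatibleWith ω J ∧ J e = f := by
  have h := isCompl_span_pair_orthogonal hω.isAlt hef
  obtain ⟨T, hT, hωT⟩ :=
    (hω.restrict_orthogonal h.codisjoint).exists_compatible_complexStructure
  exact exists_compatible_complexStructure_map_eq_of_orthogonal hω.isAlt hef hT hωT

end IsSymplecticForm

end Symplectic

theorem exists_compatible_complex_structure_orthogonal_planes
    {V : Type*} [AddCommGroup V] [Module ℝ V] [FiniteDimensional ℝ V]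
    (ω : V →ₗ[ℝ] V →ₗ[ℝ] ℝ) (hω : IsSymplecticForm ω)
    (v w : V) (hvw : LinearIndependent ℝ ![v, w]) (hperp : ω v w = 0) :
    ∃ J : V →ₗ[ℝ] V, IsComplexStructure J ∧ CompatibleWith ω J ∧
      ω v (J w) = 0 ∧ ω (J v) w = 0 ∧ ω (J v) (J w) = 0 := by
  have hv : v ∉ Submodule.span ℝ {w} := by
    rw [Submodule.mem_span_singleton, not_exists]
    exact (linearIndependent_fin2.1 hvw).2
  obtain ⟨f, hf, hvf⟩ := hω.exists_mem_orthogonal_apply_eq_one hv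
  obtain ⟨J, hJ, hωJ, rfl⟩ := hω.exists_compatible_complexStructure_map_eq hvf
  have hwJv : ω w (J v) = 0 := hf w (Submodule.mem_span_singleton_self w)
  have hJvw : ω (J v) w = 0 := hω.isAlt.isRefl _ _ hwJv
  have hvJw : ω v (J w) = 0 := by rw [hωJ.apply_map_right hJ, hJvw, neg_zero]
  exact ⟨J, hJ, hωJ, hvJw, hJvw, (hωJ.2 v w).trans hperp⟩
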